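/- Let A be a finite-dimensional subspace of V decomposed as A = A0 ⊕ A1 where A1 ≤ V1 and A0 = Rad(A) = A ∩ Rad(V). Then for every r ∈ ℕ and every finite-dimensional subspace B ≤ V_{A1} with A ≤ B, there exists a finite-dimensional subspace C ≤ V_{A1} such that for every coloring ξ from the set of subspaces of C isometric to A into r colors, there exists a subspace B' with A1 ≤ B' ≤ C and B' isometric to B such that ξ is constant on the set of all subspaces of B' of the form A0' ⊕ A1 with A0' ≤ Rad(V) and A0' ⊕ A1 isometric to A. -/

import Mathlib

open Module Submodule

/-- Two subspaces `X, Y` of `V` are isometric with respect to the bilinear form `β`. -/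
def IsIsometric {V : Type*} [AddCommGroup V] [Module (ZMod 2) V]
    (β : V →ₗ[ZMod 2] V →ₗ[ZMod 2] ZMod 2) (X Y : Submodule (ZMod 2) V) : Prop :=
  ∃ f : X ≃ₗ[ZMod 2] Y, ∀ x y : X, β (x : V) (y : V) = β (f x : V) (f y : V)

/-- The radical of a subspace `X` with respect to the bilinear form `β`. -/
def srad {V : Type*} [AddCommGroup V] [Module (ZMod 2) V]
    (β : V →ₗ[ZMod 2] V →ₗ[ZMod 2] ZMod 2) (X : Submodule (ZMod 2) V) :
    Submodule (ZMod 2) V :=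
  X ⊓ (⨅ y ∈ X, LinearMap.ker (β.flip y))

/-!
Subspaces `A0 ⊔ A1` with `A0 ≤ ker β` are determined up to isometry by the dimension of `A0`, so
the theorem reduces to the Ramsey theorem of Graham, Leeb and Rothschild for the `t`-dimensional
subspaces of a vector space over a finite field, applied inside `ker β` to `W ↦ ξ (W ⊔ A1)`.

That theorem follows from the Hales–Jewett theorem for the cube `(Dual K M) ^ ι`, whose points are
the linear maps `M → K ^ ι`. A combinatorial line in it yields an embedding `g` of `M` and a vector
`v` such that all the maps `g + φ • v`, `φ ∈ Dual K M`, induce the same colouring of the subspaces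
of `M`. Since the images under these maps exhaust the subspaces of `range g ⊔ K ∙ v` avoiding `v`,
the colour of such a subspace `W` depends on `W ⊔ K ∙ v` only. By induction on `t`, one may assume
that `W ⊔ K ∙ v` has the same colour `γ` for all `t`-dimensional `W ≤ range g`. A further induction
on the target dimensions then finds in `range g` either a large enough subspace of another colour,
or one of colour `γ` and dimension one too small, and the latter is enlarged by `v`.
-/

section SubspaceRamsey

variable {K V κ : Type*} [Field K] [AddCommGroup V] [Module K V]

lemma finrank_sup_of_disjoint {X Y : Submodule K V} [FiniteDimensional K X]
    [FiniteDimensional K Y] (h : Disjoint X Y) :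
    finrank K ↥(X ⊔ Y) = finrank K X + finrank K Y := by
  rw [← finrank_sup_add_finrank_inf_eq, h.eq_bot, finrank_bot, add_zero]

lemma finrank_sup_span_singleton_of_notMem {X : Submodule K V} [FiniteDimensional K X] {v : V}
    (hv : v ∉ X) : finrank K ↥(X ⊔ K ∙ v) = finrank K X + 1 := by
  have hv0 : v ≠ 0 := fun h ↦ hv (h ▸ X.zero_mem)
  rw [finrank_sup_of_disjoint (disjoint_span_singleton_of_notMem hv), finrank_span_singleton hv0]

lemma exists_le_finrank_eq_of_le_rank {E : Submodule K V} {n : ℕ} (h : n ≤ Module.rank K E) :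
    ∃ X ≤ E, FiniteDimensional K X ∧ finrank K X = n := by
  obtain ⟨b, hb⟩ := exists_linearIndependent_of_le_rank h
  have hbE : LinearIndependent K (E.subtype ∘ b) := hb.map' E.subtype E.ker_subtype
  refine ⟨span K (Set.range (E.subtype ∘ b)), span_le.2 ?_,
    .span_of_finite K (Set.finite_range _), by rw [finrank_span_eq_card hbE, Fintype.card_fin]⟩
  rintro _ ⟨i, rfl⟩
  exact (b i).2

/-- All `t`-dimensional subspaces of `X` have the colour `γ` under `ξ`. -/
def IsMonochromatic (ξ : Submodule K V → κ) (t : ℕ) (γ : κ) (X : Submodule K V) : Prop :=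
  ∀ W ≤ X, finrank K W = t → ξ W = γ

/-- On the subspaces of `E` avoiding `v`, the colouring `ξ` factors through the quotient by the
line spanned by `v`; a subspace of the quotient is encoded by its preimage `W ⊔ K ∙ v`. -/
def FactorsModulo (ξ : Submodule K V → κ) (v : V) (E : Submodule K V) : Prop :=
  ∀ W ≤ E, ∀ W' ≤ E, v ∉ W → v ∉ W' → W ⊔ K ∙ v = W' ⊔ K ∙ v → ξ W = ξ W'

variable (K V) in
/-- The arrow relation `n → (m_γ)_γ` of Ramsey theory for `t`-dimensional subspaces of `V`: when
these are coloured, every subspace of dimension at least `n` contains, for some colour `γ`, an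
`m γ`-dimensional subspace that is monochromatic of colour `γ`. -/
def SubspaceArrow (t : ℕ) (m : κ → ℕ) (n : ℕ) : Prop :=
  ∀ (E : Submodule K V) [FiniteDimensional K E], n ≤ finrank K E → ∀ ξ : Submodule K V → κ,
    ∃ γ, ∃ X ≤ E, finrank K X = m γ ∧ IsMonochromatic ξ t γ X

lemma exists_map_add_smulRight_eq {M : Type*} [AddCommGroup M] [Module K M] (g : M →ₗ[K] V)
    {v : V} {W : Submodule K V} (hvW : v ∉ W) (hW : W ≤ LinearMap.range g ⊔ K ∙ v) :
    ∃ φ : Dual K M, ((W ⊔ K ∙ v).comap g).map (g + φ.smulRight v) = W := by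
  obtain ⟨f, hfv, hf⟩ := exists_le_ker_of_notMem hvW
  -- `g + φ • v` is `g` followed by the projection onto `ker f` along `v`.
  let φ : Dual K M := -(f v)⁻¹ • (f ∘ₗ g)
  have hφ {x : M} {w z : V} (hw : w ∈ W) (hz : z ∈ K ∙ v) (hx : w + z = g x) :
      (g + φ.smulRight v) x = w := by
    obtain ⟨a, rfl⟩ := mem_span_singleton.1 hz
    have hfw : f w = 0 := hf hw
    simp [φ, ← hx, hfw, mul_comm a, inv_mul_cancel_left₀ hfv]
  refine ⟨φ, le_antisymm ?_ fun w hw ↦ ?_⟩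
  · rintro _ ⟨x, hx, rfl⟩
    obtain ⟨w, hw, z, hz, hwz⟩ := mem_sup.1 hx
    rwa [hφ hw hz hwz]
  · obtain ⟨_, ⟨x, rfl⟩, z, hz, hxz⟩ := mem_sup.1 (hW hw)
    have hwz : w + -z = g x := by rw [← hxz, add_neg_cancel_right]
    exact ⟨x, mem_sup.2 ⟨w, hw, -z, neg_mem hz, hwz⟩, hφ hw (neg_mem hz) hwz⟩

lemma exists_line_apply_eq_add_smul {ι D : Type*} [AddCommGroup D] [Module K D]
    (l : Combinatorics.Line D ι) : ∃ w : ι → K, w ≠ 0 ∧ ∀ φ i, l φ i = l 0 i + w i • φ := by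
  classical
  obtain ⟨i, hi⟩ := l.proper
  refine ⟨fun i ↦ if l.idxFun i = none then 1 else 0, fun h ↦ ?_, fun φ i ↦ ?_⟩
  · simpa [hi] using congrFun h i
  · cases h : l.idxFun i <;> simp [h]

lemma exists_color_map_add_smulRight_eq [Finite K] [Finite κ] (M : Type*) [AddCommGroup M]
    [Module K M] [FiniteDimensional K M] :
    ∃ n : ℕ, ∀ (E : Submodule K V) [FiniteDimensional K E], n ≤ finrank K E →
      ∀ ξ : Submodule K V → κ, ∃ (g : M →ₗ[K] V) (v : V), LinearMap.range g ≤ E ∧ v ∈ E ∧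
        Function.Injective g ∧ v ∉ LinearMap.range g ∧
        ∀ (S : Submodule K M) (φ : Dual K M), ξ (S.map (g + φ.smulRight v)) = ξ (S.map g) := by
  have : Finite M := Module.finite_of_finite K
  have : Finite (Dual K M) := Module.finite_of_finite K
  -- The graphs of the linear maps `M → K ^ ι` form the cube `(Dual K M) ^ ι`.
  obtain ⟨ι, _, hι⟩ := Combinatorics.Line.exists_mono_in_high_dimension
    (Dual K M) (Submodule K M → κ)
  refine ⟨finrank K (M × (ι → K)), fun E _ hE ξ ↦ ?_⟩
  obtain ⟨Φ, hΦ⟩ := finrank_le_iff_exists_linearMap.1 hE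
  let graphMap (ψ : ι → Dual K M) : M →ₗ[K] V :=
    E.subtype ∘ₗ Φ ∘ₗ LinearMap.id.prod (LinearMap.pi ψ)
  obtain ⟨l, c, hl⟩ := hι fun ψ S ↦ ξ (S.map (graphMap ψ))
  obtain ⟨w, hw0, hw⟩ := exists_line_apply_eq_add_smul (K := K) l
  have hline (φ : Dual K M) :
      graphMap (l φ) = graphMap (l 0) + φ.smulRight (Φ (0, w) : V) := by
    ext x
    have h : (x, fun i ↦ l φ i x) = (x, fun i ↦ l 0 i x) + φ x • (0, w) := by
      refine Prod.ext (by simp) (funext fun i ↦ ?_)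
      change l φ i x = l 0 i x + φ x * w i
      rw [hw φ i]
      simp only [LinearMap.add_apply, LinearMap.smul_apply, smul_eq_mul, mul_comm]
    exact congrArg Subtype.val ((congrArg Φ h).trans (by rw [map_add, map_smul]))
  refine ⟨graphMap (l 0), Φ (0, w), ?_, (Φ (0, w)).2, ?_, ?_, fun S φ ↦ ?_⟩
  · rintro _ ⟨x, rfl⟩
    exact (Φ _).2
  · exact E.injective_subtype.comp (hΦ.comp fun x y h ↦ congrArg Prod.fst h)
  · rintro ⟨x, hx⟩
    have hx' : (x, fun i ↦ l 0 i x) = (0, w) := hΦ (Subtype.ext hx)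
    obtain ⟨rfl, h⟩ := Prod.mk.inj hx'
    exact hw0 (h ▸ funext fun i ↦ map_zero _)
  · rw [← hline]
    exact congrFun ((hl φ).trans (hl 0).symm) S

lemma exists_factorsModulo [Finite K] [Finite κ] (u : ℕ) :
    ∃ n : ℕ, ∀ (E : Submodule K V) [FiniteDimensional K E], n ≤ finrank K E →
      ∀ ξ : Submodule K V → κ, ∃ U ≤ E, ∃ v ∈ E, finrank K U = u ∧ v ∉ U ∧
        FactorsModulo ξ v (U ⊔ K ∙ v) := by
  obtain ⟨n, hn⟩ := exists_color_map_add_smulRight_eq (K := K) (V := V) (κ := κ) (Fin u → K)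
  refine ⟨n, fun E _ hE ξ ↦ ?_⟩
  obtain ⟨g, v, hgE, hvE, hg, hvg, hξ⟩ := hn E hE ξ
  refine ⟨LinearMap.range g, hgE, v, hvE, by simp [LinearMap.finrank_range_of_inj hg], hvg,
    fun W hW W' hW' hvW hvW' hWW' ↦ ?_⟩
  obtain ⟨φ, hφ⟩ := exists_map_add_smulRight_eq g hvW hW
  obtain ⟨φ', hφ'⟩ := exists_map_add_smulRight_eq g hvW' hW'
  rw [← hφ, ← hφ', hξ, hξ, hWW']

lemma IsMonochromatic.mono {ξ : Submodule K V → κ} {t : ℕ} {γ : κ} {X Y : Submodule K V}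
    (hX : IsMonochromatic ξ t γ X) (h : Y ≤ X) : IsMonochromatic ξ t γ Y :=
  fun W hW ↦ hX W (hW.trans h)

lemma FactorsModulo.mono {ξ : Submodule K V → κ} {v : V} {E F : Submodule K V}
    (hE : FactorsModulo ξ v E) (h : F ≤ E) : FactorsModulo ξ v F :=
  fun W hW W' hW' ↦ hE W (hW.trans h) W' (hW'.trans h)

lemma IsMonochromatic.sup_span_singleton {ξ : Submodule K V → κ} {t : ℕ} {γ : κ}
    {X : Submodule K V} [FiniteDimensional K X] {v : V} (hvX : v ∉ X)
    (hX : IsMonochromatic ξ (t + 1) γ X)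
    (hXv : IsMonochromatic (fun W ↦ ξ (W ⊔ K ∙ v)) t γ X)
    (hξ : FactorsModulo ξ v (X ⊔ K ∙ v)) : IsMonochromatic ξ (t + 1) γ (X ⊔ K ∙ v) := by
  intro W hW hWt
  have := finiteDimensional_of_le hW
  let Y := X ⊓ (W ⊔ K ∙ v)
  have hYX : Y ≤ X := inf_le_left
  have hvY : v ∉ Y := fun h ↦ hvX (hYX h)
  have hYW : Y ⊔ K ∙ v = W ⊔ K ∙ v := by
    rw [sup_comm, ← sup_inf_assoc_of_le X le_sup_right, sup_comm,
      inf_eq_right.2 (sup_le hW le_sup_right)]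
  have hYfin := finrank_sup_span_singleton_of_notMem hvY
  by_cases hvW : v ∈ W
  · have hYW' : Y ⊔ K ∙ v = W := hYW.trans (sup_eq_left.2 (by simpa using hvW))
    rw [← hYW']
    exact hXv Y hYX (by rw [hYW'] at hYfin; omega)
  · rw [hξ W hW Y (hYX.trans le_sup_left) hvW hvY hYW.symm]
    rw [hYW, finrank_sup_span_singleton_of_notMem hvW] at hYfin
    exact hX Y hYX (by omega)

lemma exists_subspaceArrow_succ_of_pred [Finite K] [Finite κ] [DecidableEq κ] {t : ℕ} {m : κ → ℕ}
    (hm : ∀ γ, m γ ≠ 0)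
    (hdim : ∀ u : ℕ, ∃ n, SubspaceArrow K V t (fun _ : κ ↦ u) n)
    (hpred : ∀ γ, ∃ n, SubspaceArrow K V (t + 1) (Function.update m γ (m γ - 1)) n) :
    ∃ n, SubspaceArrow K V (t + 1) m n := by
  choose N hN using hpred
  obtain ⟨N', hN'⟩ := Finite.exists_le N
  obtain ⟨u, hu⟩ := hdim N'
  obtain ⟨n, hn⟩ := exists_factorsModulo (K := K) (V := V) (κ := κ) u
  refine ⟨n, fun E _ hE ξ ↦ ?_⟩
  obtain ⟨U, hUE, v, hvE, hU, hvU, hξ⟩ := hn E hE ξ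
  have := finiteDimensional_of_le hUE
  obtain ⟨γ, U', hU'U, hU', hγ⟩ := hu U hU.ge fun W ↦ ξ (W ⊔ K ∙ v)
  have := finiteDimensional_of_le hU'U
  obtain ⟨δ, X, hXU', hX, hδ⟩ := hN γ U' (hU' ▸ hN' γ) ξ
  have := finiteDimensional_of_le hXU'
  have hXU : X ≤ U := hXU'.trans hU'U
  rcases eq_or_ne δ γ with rfl | hne
  · have hvX : v ∉ X := fun h ↦ hvU (hXU h)
    refine ⟨δ, X ⊔ K ∙ v, sup_le (hXU.trans hUE) (by simpa using hvE), ?_, ?_⟩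
    · rw [finrank_sup_span_singleton_of_notMem hvX, hX, Function.update_self,
        Nat.sub_add_cancel (Nat.one_le_iff_ne_zero.2 (hm δ))]
    · exact IsMonochromatic.sup_span_singleton hvX hδ (IsMonochromatic.mono hγ hXU')
        (FactorsModulo.mono hξ (sup_le_sup_right hXU _))
  · exact ⟨δ, X, hXU.trans hUE, by simpa [hne] using hX, hδ⟩

lemma exists_subspaceArrow_succ [Finite K] [Finite κ] {t : ℕ}
    (hdim : ∀ u : ℕ, ∃ n, SubspaceArrow K V t (fun _ : κ ↦ u) n) (m : κ → ℕ) :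
    ∃ n, SubspaceArrow K V (t + 1) m n := by
  classical
  induction m using WellFoundedLT.induction with
  | ind m ih =>
  by_cases hm : ∃ γ, m γ = 0
  · obtain ⟨γ, hγ⟩ := hm
    refine ⟨0, fun E _ _ ξ ↦ ⟨γ, ⊥, bot_le, by rw [finrank_bot, hγ], fun W hW hWt ↦ ?_⟩⟩
    rw [le_bot_iff.1 hW, finrank_bot] at hWt
    omega
  · push Not at hm
    exact exists_subspaceArrow_succ_of_pred hm hdim fun γ ↦
      ih _ (update_lt_self_iff.2 (Nat.pred_lt (hm γ)))

/-- The **Graham–Leeb–Rothschild theorem**. -/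
theorem exists_subspaceArrow [Finite K] [Finite κ] (t m : ℕ) :
    ∃ n, SubspaceArrow K V t (fun _ : κ ↦ m) n := by
  induction t generalizing m with
  | zero =>
    refine ⟨m, fun E _ hE ξ ↦ ?_⟩
    obtain ⟨X, hXE, _, hX⟩ := exists_le_finrank_eq_of_le_rank
      (E := E) (n := m) (by rwa [← finrank_eq_rank, Nat.cast_le])
    refine ⟨ξ ⊥, X, hXE, hX, fun W hW hW0 ↦ ?_⟩
    have := finiteDimensional_of_le hW
    rw [finrank_eq_zero.1 hW0]
  | succ t ih => exact exists_subspaceArrow_succ ih fun _ ↦ m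

end SubspaceRamsey

lemma le_of_sup_le_sup_right_of_disjoint {α : Type*} [Lattice α] [OrderBot α] [IsModularLattice α]
    {a b c r : α} (ha : a ≤ r) (hb : b ≤ r) (hrc : Disjoint r c) (h : a ⊔ c ≤ b ⊔ c) : a ≤ b :=
  calc a ≤ (b ⊔ c) ⊓ r := le_inf (le_sup_left.trans h) ha
    _ = b := by rw [sup_inf_assoc_of_le _ hb, hrc.symm.eq_bot, sup_bot_eq]

section Isometry

open LinearMap (BilinForm)

variable {R V : Type*} [CommRing R] [AddCommGroup V] [Module R V] {X Y Z : Submodule R V}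

/-- The addition map from the external to the internal direct sum of two disjoint subspaces. -/
noncomputable def prodEquivSup (h : Disjoint X Z) : (X × Z) ≃ₗ[R] ↥(X ⊔ Z) :=
  LinearEquiv.ofInjective (X.subtype.coprod Z.subtype) (by
      rw [← LinearMap.ker_eq_bot, LinearMap.ker_coprod_of_disjoint_range _ _ (by simpa using h)]
      simp only [ker_subtype, prod_bot]) ≪≫ₗ
    LinearEquiv.ofEq _ _ (sup_eq_range X Z).symm

lemma coe_prodEquivSup (h : Disjoint X Z) (p : X × Z) :
    (prodEquivSup h p : V) = p.1 + p.2 :=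
  rfl

variable {β : BilinForm R V}

lemma apply_prodEquivSup_of_le_ker (hβ : β.IsRefl) (h : Disjoint X Z)
    (hX : X ≤ LinearMap.ker β) (p q : X × Z) :
    β (prodEquivSup h p) (prodEquivSup h q) = β p.2 q.2 := by
  have hleft (x : X) : β x = 0 := hX x.2
  have hright (x : X) (y : V) : β y x = 0 := hβ _ _ (by rw [hleft, LinearMap.zero_apply])
  simp [coe_prodEquivSup, hleft, hright]

lemma equivalent_restrict_sup_of_le_ker (hβ : β.IsRefl) (hX : X ≤ LinearMap.ker β)
    (hY : Y ≤ LinearMap.ker β) (hXZ : Disjoint X Z) (hYZ : Disjoint Y Z) (g : X ≃ₗ[R] Y) :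
    (β.restrict (X ⊔ Z)).Equivalent (β.restrict (Y ⊔ Z)) := by
  refine ⟨(prodEquivSup hXZ).symm ≪≫ₗ g.prodCongr (.refl R Z) ≪≫ₗ prodEquivSup hYZ, fun x y ↦ ?_⟩
  obtain ⟨p, rfl⟩ := (prodEquivSup hXZ).surjective x
  obtain ⟨q, rfl⟩ := (prodEquivSup hXZ).surjective y
  simp [apply_prodEquivSup_of_le_ker hβ hXZ hX, apply_prodEquivSup_of_le_ker hβ hYZ hY]

end Isometry

lemma isIsometric_iff_equivalent_restrict {V : Type*} [AddCommGroup V] [Module (ZMod 2) V]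
    {β : LinearMap.BilinForm (ZMod 2) V} {X Y : Submodule (ZMod 2) V} :
    IsIsometric β X Y ↔ (β.restrict X).Equivalent (β.restrict Y) :=
  ⟨fun ⟨f, hf⟩ ↦ ⟨⟨f, fun x y ↦ (hf x y).symm⟩⟩,
    fun ⟨f⟩ ↦ ⟨f.toLinearEquiv, fun x y ↦ (f.map_app' x y).symm⟩⟩

theorem ramsey_for_copies_over_A1_general {K V κ : Type*} [Field K] [Finite K] [AddCommGroup V]
    [Module K V] [Finite κ] {β : LinearMap.BilinForm K V} (hβ : β.IsRefl)
    (hrad : ¬ FiniteDimensional K (LinearMap.ker β)) {A A1 B : Submodule K V}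
    [FiniteDimensional K B] (hA1 : Disjoint (LinearMap.ker β) A1) (hA1A : A1 ≤ A) (hAB : A ≤ B)
    (hB : B ≤ LinearMap.ker β ⊔ A1) :
    ∃ C : Submodule K V, FiniteDimensional K C ∧ C ≤ LinearMap.ker β ⊔ A1 ∧
      ∀ ξ : Submodule K V → κ, ∃ B' : Submodule K V,
        A1 ≤ B' ∧ B' ≤ C ∧ (β.restrict B').Equivalent (β.restrict B) ∧
        ∀ A0 A0' : Submodule K V, A0 ≤ LinearMap.ker β → A0' ≤ LinearMap.ker β →
          A0 ⊔ A1 ≤ B' → A0' ⊔ A1 ≤ B' → (β.restrict (A0 ⊔ A1)).Equivalent (β.restrict A) →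
          (β.restrict (A0' ⊔ A1)).Equivalent (β.restrict A) → ξ (A0 ⊔ A1) = ξ (A0' ⊔ A1) := by
  have := finiteDimensional_of_le (hA1A.trans hAB)
  have hBdec : (B ⊓ LinearMap.ker β) ⊔ A1 = B := by
    rw [inf_sup_assoc_of_le _ (hA1A.trans hAB), inf_eq_left.2 hB]
  obtain ⟨n, hn⟩ := exists_subspaceArrow (K := K) (V := V) (κ := κ)
    (finrank K A - finrank K A1) (finrank K ↥(B ⊓ LinearMap.ker β))
  obtain ⟨E, hE, _, hEn⟩ := exists_le_finrank_eq_of_le_rank (n := n)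
    (Cardinal.natCast_le_aleph0.trans (not_lt.1 (mt rank_lt_aleph0_iff.1 hrad)))
  refine ⟨E ⊔ A1, inferInstance, sup_le_sup_right hE _, fun ξ ↦ ?_⟩
  obtain ⟨γ, X, hXE, hX, hγ⟩ := hn E hEn.ge fun W ↦ ξ (W ⊔ A1)
  have := finiteDimensional_of_le hXE
  have hXker := hXE.trans hE
  have hiso : (β.restrict (X ⊔ A1)).Equivalent (β.restrict B) := by
    have := equivalent_restrict_sup_of_le_ker hβ hXker inf_le_right (hA1.mono_left hXker)
      (hA1.mono_left inf_le_right) (.ofFinrankEq _ _ hX)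
    rwa [hBdec] at this
  have hcolor (A0 : Submodule K V) (hA0 : A0 ≤ LinearMap.ker β) (hA0X : A0 ⊔ A1 ≤ X ⊔ A1)
      (hA0A : (β.restrict (A0 ⊔ A1)).Equivalent (β.restrict A)) : ξ (A0 ⊔ A1) = γ := by
    have hA0X : A0 ≤ X := le_of_sup_le_sup_right_of_disjoint hA0 hXker hA1 hA0X
    have := finiteDimensional_of_le hA0X
    have hfin := hA0A.some.toLinearEquiv.finrank_eq
    rw [finrank_sup_of_disjoint (hA1.mono_left hA0)] at hfin
    exact hγ A0 hA0X (by omega)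
  exact ⟨X ⊔ A1, le_sup_right, sup_le_sup_right hXE _, hiso, fun A0 A0' hA0 hA0' hX hX' hA hA' ↦
    (hcolor A0 hA0 hX hA).trans (hcolor A0' hA0' hX' hA').symm⟩

/-- `V` is a countably infinite dimensional space over `GF(2)` with an alternating form
`β`, `V = V1 ⊕ Rad(V)` where `V1` is an orthogonal sum of `k ≥ 1` hyperbolic planes and
`Rad(V) = ker β` is infinite dimensional.  Let `A = A0 ⊕ A1` with `A1 ≤ V1` and
`A0 = Rad(A) = A ∩ Rad(V)`.  Then for every `r` and every finite dimensional
`B ≤ V_{A1} = Rad(V) ⊔ A1` with `A ≤ B` there is a finite dimensional `C ≤ V_{A1}` such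
that every `r`-coloring of copies of `A` in `C` is constant, on the subspaces of the form
`A0' ⊔ A1` (`A0' ≤ Rad(V)`) isometric to `A`, inside some copy `B'` of `B` with
`A1 ≤ B' ≤ C`. -/
theorem ramsey_for_copies_over_A1
    (k : ℕ) (hk : 1 ≤ k)
    (V : Type*) [AddCommGroup V] [Module (ZMod 2) V]
    (β : V →ₗ[ZMod 2] V →ₗ[ZMod 2] ZMod 2)
    (halt : ∀ v : V, β v v = 0)
    (e estar : Fin k → V)
    (hef : ∀ i j, β (e i) (estar j) = if i = j then 1 else 0)
    (hee : ∀ i j, β (e i) (e j) = 0)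
    (hff : ∀ i j, β (estar i) (estar j) = 0)
    (hrank : Module.rank (ZMod 2) V = Cardinal.aleph0)
    (hcompl : IsCompl (span (ZMod 2) (Set.range e ∪ Set.range estar)) (LinearMap.ker β))
    (hradinf : ¬ FiniteDimensional (ZMod 2) (LinearMap.ker β))
    (A A0 A1 : Submodule (ZMod 2) V)
    (hAfin : FiniteDimensional (ZMod 2) A)
    (hA1V1 : A1 ≤ span (ZMod 2) (Set.range e ∪ Set.range estar))
    (hA0rad : A0 = srad β A)
    (hA0 : A0 = A ⊓ LinearMap.ker β)
    (hAdec : A = A0 ⊔ A1) (hAdisj : Disjoint A0 A1) :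
    ∀ (r : ℕ) (B : Submodule (ZMod 2) V),
      FiniteDimensional (ZMod 2) B → B ≤ LinearMap.ker β ⊔ A1 → A ≤ B →
      ∃ C : Submodule (ZMod 2) V,
        FiniteDimensional (ZMod 2) C ∧ C ≤ LinearMap.ker β ⊔ A1 ∧
        ∀ ξ : Submodule (ZMod 2) V → Fin r,
          ∃ B' : Submodule (ZMod 2) V,
            A1 ≤ B' ∧ B' ≤ C ∧ IsIsometric β B' B ∧
            ∀ A0' A0'' : Submodule (ZMod 2) V,
              A0' ≤ LinearMap.ker β → A0'' ≤ LinearMap.ker β →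
              A0' ⊔ A1 ≤ B' → A0'' ⊔ A1 ≤ B' →
              IsIsometric β (A0' ⊔ A1) A → IsIsometric β (A0'' ⊔ A1) A →
              ξ (A0' ⊔ A1) = ξ (A0'' ⊔ A1) := by
  intro r B _ hB hAB
  simpa only [isIsometric_iff_equivalent_restrict] using
    ramsey_for_copies_over_A1_general (LinearMap.IsAlt.isRefl halt) hradinf
      (hcompl.disjoint.mono_left hA1V1).symm (hAdec ▸ le_sup_right) hAB hB
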